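/- arXiv:math/0701263 — 2 statements merged into one kernel-verified Lean document; each statement's English description precedes it below -/
import Mathlib

section
/- Let A be a C*-algebra, H a complex Hilbert space, ρ = [ρ_ij] a completely n-positive linear map from A to L(H), and (Φ_ρ, H_ρ, V_{ρ,1}, …, V_{ρ,n}) a Stinespring representation of ρ. If T is a positive element of the commutant Φ_ρ(A)′ of Φ_ρ(A) in L(H_ρ), then the n×n matrix ρ_T of continuous linear maps from A to L(H) whose (i,j)-entry is a ↦ V_{ρ,i}* T Φ_ρ(a) V_{ρ,j} is a completely n-positive linear map from A to L(H). -/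
/-!
Since `T` commutes with `Φ(A)`, for `x = y* y` in `M_m(M_n(A))` the entries of the image of `x` are
`V_i* T Φ(x_{(k,i),(l,j)}) V_j = ∑_q (Φ(y_{q,(k,i)}) V_i)* T (Φ(y_{q,(l,j)}) V_j)`,
where `q` runs over pairs of indices. For fixed `q` these are the matrix entries of the operator
`W_q* T W_q` on the Hilbert sum `H^{mn}`, with `W_q : H^{mn} → K` the row
`∑_p Φ(y_{q,p}) V_p pr_p`. The sum over `q` is therefore positive (`exists_gram_factor`), hence of
the form `Z* Z` in `L(H^{mn})`, and the matrix entries of `Z` give the required factorization.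
-/

noncomputable section

open ContinuousLinearMap

universe u v

variable {A : Type u} [NonUnitalCStarAlgebra A]
variable {H : Type v} [NormedAddCommGroup H] [InnerProductSpace ℂ H] [CompleteSpace H]

/-- A map between star algebras is *completely positive* if each of its matrix
amplifications preserves positivity, where an element of a C⋆-algebra is positive
iff it is of the form `star y * y`. -/
def IsCP {R S : Type*} [NonUnitalSemiring R] [StarRing R]
    [NonUnitalSemiring S] [StarRing S] (φ : R → S) : Prop :=
  ∀ (m : ℕ) (x : Matrix (Fin m) (Fin m) R),
    (∃ y : Matrix (Fin m) (Fin m) R, x = star y * y) →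
    ∃ z : Matrix (Fin m) (Fin m) S, x.map φ = star z * z

/-- The map `Mₙ(A) → Mₙ(L(H))` induced by an `n × n` matrix of maps,
`[a_ij] ↦ [ρ_ij (a_ij)]`. -/
def matApply {n : ℕ} (ρ : Fin n → Fin n → (A →L[ℂ] (H →L[ℂ] H)))
    (x : Matrix (Fin n) (Fin n) A) : Matrix (Fin n) (Fin n) (H →L[ℂ] H) :=
  Matrix.of fun i j => ρ i j (x i j)

/-- An `n × n` matrix of continuous linear maps from `A` to `L(H)` is a
*completely `n`-positive linear map* if the induced map `Mₙ(A) → Mₙ(L(H))` is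
completely positive. -/
def IsCnP {n : ℕ} (ρ : Fin n → Fin n → (A →L[ℂ] (H →L[ℂ] H))) : Prop :=
  IsCP (matApply ρ)

/-- `(Φ, K, V 0, …, V (n-1))` is a Stinespring representation of the completely
`n`-positive map `ρ = [ρ_ij]` : `Φ` is a (continuous) `*`-homomorphism,
`ρ_ij (a) = (V i)* (Φ a) (V j)`, and the vectors `Φ a (V i ξ)` span a dense
subspace of `K`. -/
def IsStinespringRep {n : ℕ} (ρ : Fin n → Fin n → (A →L[ℂ] (H →L[ℂ] H)))
    {K : Type*} [NormedAddCommGroup K] [InnerProductSpace ℂ K] [CompleteSpace K]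
    (Φ : A →⋆ₙₐ[ℂ] (K →L[ℂ] K)) (V : Fin n → (H →L[ℂ] K)) : Prop :=
  Continuous (⇑Φ) ∧
  (∀ (i j : Fin n) (a : A), ρ i j a = (adjoint (V i)).comp ((Φ a).comp (V j))) ∧
  Dense ((Submodule.span ℂ
    {x : K | ∃ (a : A) (ξ : H) (i : Fin n), x = Φ a (V i ξ)} : Submodule ℂ K) : Set K)

/-- Stated for an abstract Hilbert space, because instance search for the C⋆-algebra structure is
costly on operators on a `PiLp` space. -/
lemma exists_eq_star_mul_self {E : Type*} [NormedAddCommGroup E] [InnerProductSpace ℂ E]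
    [CompleteSpace E] {R : E →L[ℂ] E} (hR : 0 ≤ R) : ∃ Z : E →L[ℂ] E, R = star Z * Z :=
  CStarAlgebra.nonneg_iff_eq_star_mul_self.1 hR

/-- A finite sum of Gram-type matrices `[B_{q,p}* T B_{q,r}]` with `T` positive is of the form
`C* C` with `C` a *square* matrix over `L(H)`, although the `B_{q,p}` take values in another
space `K`. -/
lemma exists_gram_factor {ι κ : Type*} [Fintype ι] [Fintype κ]
    {K : Type*} [NormedAddCommGroup K] [InnerProductSpace ℂ K] [CompleteSpace K]
    (T : K →L[ℂ] K) (hT : T.IsPositive) (B : κ → ι → (H →L[ℂ] K)) :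
    ∃ C : ι → ι → (H →L[ℂ] H), ∀ p r : ι,
      ∑ q, (adjoint (B q p)).comp (T.comp (B q r)) = ∑ q, (adjoint (C q p)).comp (C q r) := by
  classical
  let P : ι → (PiLp 2 (fun _ : ι => H) →L[ℂ] H) := fun p => PiLp.proj 2 (fun _ : ι => H) p
  -- The adjoint of a coordinate projection is the corresponding inclusion.
  have hPadj : ∀ (p : ι) (ξ : H), adjoint (P p) ξ = PiLp.single 2 p ξ := by
    intro p ξ
    refine ext_inner_right ℂ fun w => ?_
    rw [adjoint_inner_left, PiLp.inner_apply]
    rw [Finset.sum_eq_single p]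
    · simp [P]
    · intro b _ hb
      simp [hb]
    · simp
  have hPP : ∀ p r : ι, (P p).comp (adjoint (P r)) =
      if p = r then ContinuousLinearMap.id ℂ H else 0 := by
    intro p r
    ext ξ
    rw [comp_apply, hPadj]
    by_cases hp : p = r
    · subst hp; simp [P]
    · simp [P, hp]
  have hsum : ∑ q, (adjoint (P q)).comp (P q) = ContinuousLinearMap.id ℂ _ := by
    ext w p
    simp only [sum_apply, comp_apply, hPadj]
    simp [P, Pi.single_apply, WithLp.ofLp_sum]
  let W : κ → (PiLp 2 (fun _ : ι => H) →L[ℂ] K) := fun q => ∑ p, (B q p).comp (P p)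
  have hW : ∀ q p, (W q).comp (adjoint (P p)) = B q p := by
    intro q p
    simp only [W, finsetSum_comp, comp_assoc, hPP]
    rw [Finset.sum_eq_single p]
    · simp
    · intro b _ hb
      simp [hb]
    · simp
  have hWadj : ∀ q p, (P p).comp (adjoint (W q)) = adjoint (B q p) := by
    intro q p
    rw [← hW q p, adjoint_comp, adjoint_adjoint]
  have hR : 0 ≤ ∑ q, (adjoint (W q)).comp (T.comp (W q)) :=
    Finset.sum_nonneg fun q _ => (nonneg_iff_isPositive _).2 (hT.adjoint_conj (W q))
  obtain ⟨Z, hZ⟩ := exists_eq_star_mul_self hR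
  refine ⟨fun q p => (P q).comp (Z.comp (adjoint (P p))), fun p r => ?_⟩
  -- Both sides are the `(p, r)` entry of the operator `∑ q, W_q* T W_q = Z* Z`.
  calc ∑ q, (adjoint (B q p)).comp (T.comp (B q r))
      = (P p).comp ((∑ q, (adjoint (W q)).comp (T.comp (W q))).comp (adjoint (P r))) := by
        simp only [finsetSum_comp, comp_finsetSum]
        refine Finset.sum_congr rfl fun q _ => ?_
        rw [← hW q r, ← hWadj q p]
        rfl
    _ = (P p).comp ((adjoint Z).comp
          ((∑ q, (adjoint (P q)).comp (P q)).comp (Z.comp (adjoint (P r))))) := by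
        rw [hZ, hsum]
        rfl
    _ = _ := by
        simp only [finsetSum_comp, comp_finsetSum]
        refine Finset.sum_congr rfl fun q _ => ?_
        rw [adjoint_comp, adjoint_comp, adjoint_adjoint]
        rfl

/-- If `T` is a positive element of the commutant of `Φ_ρ(A)`, then
`ρ_T = [a ↦ V_{ρ,i}* T Φ_ρ(a) V_{ρ,j}]` is a completely `n`-positive linear map. -/
theorem statement7 {n : ℕ} (ρ : Fin n → Fin n → (A →L[ℂ] (H →L[ℂ] H)))
    (hρ : IsCnP ρ)
    {K : Type*} [NormedAddCommGroup K] [InnerProductSpace ℂ K] [CompleteSpace K]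
    (Φ : A →⋆ₙₐ[ℂ] (K →L[ℂ] K)) (V : Fin n → (H →L[ℂ] K))
    (h : IsStinespringRep ρ Φ V)
    (T : K →L[ℂ] K) (hTpos : T.IsPositive)
    (hTcomm : ∀ a : A, T.comp (Φ a) = (Φ a).comp T) :
    ∃ ρT : Fin n → Fin n → (A →L[ℂ] (H →L[ℂ] H)),
      (∀ (i j : Fin n) (a : A),
        ρT i j a = (adjoint (V i)).comp (T.comp ((Φ a).comp (V j)))) ∧
      IsCnP ρT := by
  obtain ⟨hΦ, -, -⟩ := h
  let ρT : Fin n → Fin n → (A →L[ℂ] (H →L[ℂ] H)) := fun i j =>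
    { toFun := fun a => (adjoint (V i)).comp (T.comp ((Φ a).comp (V j)))
      map_add' := fun a b => by simp only [map_add, add_comp, comp_add]
      map_smul' := fun c a => by simp only [map_smul, smul_comp, comp_smul, RingHom.id_apply]
      cont := by fun_prop }
  refine ⟨ρT, fun _ _ _ => rfl, ?_⟩
  rintro m x ⟨y, rfl⟩
  obtain ⟨C, hC⟩ := exists_gram_factor (ι := Fin m × Fin n) (κ := Fin m × Fin n) T hTpos
    (fun q p => (Φ (y q.1 p.1 q.2 p.2)).comp (V p.2))
  refine ⟨Matrix.of fun k l => Matrix.of fun i j => C (k, i) (l, j), ?_⟩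
  ext1 k l
  ext1 i j
  have hx : (star y * y) k l i j =
      ∑ q : Fin m × Fin n, star (y q.1 k q.2 i) * y q.1 l q.2 j := by
    simp only [Matrix.mul_apply, Matrix.sum_apply, Matrix.star_apply, Fintype.sum_prod_type]
  have hT : ∀ a b : A, T.comp (Φ (star a * b)) = (adjoint (Φ a)).comp (T.comp (Φ b)) := by
    intro a b
    rw [map_mul]
    change (T.comp (Φ (star a))).comp (Φ b) = _
    rw [hTcomm, map_star]
    rfl
  calc _ = ρT i j ((star y * y) k l i j) := rfl
    _ = ∑ q : Fin m × Fin n, (adjoint ((Φ (y q.1 k q.2 i)).comp (V i))).comp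
          (T.comp ((Φ (y q.1 l q.2 j)).comp (V j))) := by
        rw [hx, map_sum]
        refine Finset.sum_congr rfl fun q _ => ?_
        change (adjoint (V i)).comp ((T.comp (Φ _)).comp (V j)) = _
        rw [hT, adjoint_comp]
        rfl
    _ = ∑ q : Fin m × Fin n, (adjoint (C q (k, i))).comp (C q (l, j)) := hC (k, i) (l, j)
    _ = _ := by
        simp only [Matrix.mul_apply, Matrix.sum_apply, Matrix.star_apply, Fintype.sum_prod_type]
        rfl
end
end

section
/- (Radon–Nikodym theorem for completely n-positive maps.) Let A be a C*-algebra, H a complex Hilbert space, ρ = [ρ_ij] a completely n-positive linear map from A to L(H), and (Φ_ρ, H_ρ, V_{ρ,1}, …, V_{ρ,n}) a Stinespring representation of ρ. Let [0, I]_ρ = {T ∈ Φ_ρ(A)′ : 0 ≤ T ≤ I_{H_ρ}} and [0, ρ] = {θ ∈ CPⁿ(A, L(H)) : θ ≤ ρ}. Then the map T ↦ ρ_T, where (ρ_T)_ij(a) = V_{ρ,i}* T Φ_ρ(a) V_{ρ,j}, is an affine order isomorphism from [0, I]_ρ onto [0, ρ]: it is bijective, it preserves convex combinations, and for T₁, T₂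 ∈ [0, I]_ρ one has T₁ ≤ T₂ if and only if ρ_{T₁} ≤ ρ_{T₂}. -/
/-!
For `θ = [θ_ij]` put on finitely supported functions `f : A →₀ Hⁿ` the sesquilinear form
`⟨f, g⟩_θ = ∑_{a, b} ∑_{i, j} ⟪f(a)_i, θ_ij(a* b) g(b)_j⟫` (`form`), and let
`L f = ∑_a ∑_i Φ(a) V_i f(a)_i` (`repMap`), a map of dense range in `K` by the cyclicity condition
of a Stinespring representation. If `T` commutes with `Φ(A)` and `θ = ρ_T`, then
`⟨f, g⟩_θ = ⟪L f, T L g⟫` (`form_eq_inner`). Everything is read off from this identity.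

* The form of a completely `n`-positive map is positive semidefinite (`form_self_nonneg`), since
  the matrix `θ_ij(a_k* a_l)` is a Gram matrix (`gram`). Conversely `ρ_T` is completely
  `n`-positive when `T ≥ 0` (`isCnP_of_isPositive`). Applied to `T`, `1 - T` and `T₂ - T₁`, with
  density of the range of `L`, this gives that `T ↦ ρ_T` lands in `[0, ρ]` and that it preserves
  and reflects the order; injectivity is density again.
* For surjectivity let `0 ≤ θ ≤ ρ`. Then `0 ≤ ⟨f, f⟩_θ ≤ ⟨f, f⟩_ρ = ‖L f‖²`, so `L f ↦ [f]` extends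
  to a contraction `W` from `K` to the Hilbert space completion of `(A →₀ Hⁿ, ⟨·, ·⟩_θ)`, and
  `T = W* W` satisfies `0 ≤ T ≤ 1` and `⟪L f, T L g⟫ = ⟨f, g⟩_θ` (`exists_operator_of_core`).
  The coefficients `⟪Φ(b) V_i ξ, T Φ(c) V_j η⟫ = ⟪ξ, θ_ij(b* c) η⟫` show that `T` commutes with
  `Φ(A)` and that `θ_ij` and `(ρ_T)_ij` agree on products `b* c`; an approximate unit of `A` and
  continuity extend this to all of `A` (`exists_operator_of_isCnP`).
-/

noncomputable section

open ContinuousLinearMap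

universe u v

variable {A : Type u} [NonUnitalCStarAlgebra A]
variable {H : Type v} [NormedAddCommGroup H] [InnerProductSpace ℂ H] [CompleteSpace H]

open scoped ComplexOrder

set_option linter.unusedSectionVars false

/-! ### Operator matrices and Gram matrices -/

theorem exists_adjoint_comp_self {E : Type*} [NormedAddCommGroup E] [InnerProductSpace ℂ E]
    [CompleteSpace E] {B : E →L[ℂ] E} (hB : B.IsPositive) :
    ∃ C : E →L[ℂ] E, B = adjoint C ∘L C := by
  obtain ⟨C, hC⟩ := CStarAlgebra.nonneg_iff_eq_star_mul_self.mp
    ((nonneg_iff_isPositive B).mpr hB)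
  exact ⟨C, hC⟩

theorem sum_sum_sum_sum_eq {M α ι : Type*} [AddCommMonoid M] [Fintype α] [Fintype ι]
    (F : α → α → ι → ι → M) :
    ∑ k, ∑ l, ∑ i, ∑ j, F k l i j =
      ∑ p : α × ι, ∑ q : α × ι, F p.1 q.1 p.2 q.2 := by
  simp only [Fintype.sum_prod_type]
  exact Finset.sum_congr rfl fun k _ => Finset.sum_comm

theorem sum_rotate {M α β : Type*} [AddCommMonoid M] [Fintype α] [Fintype β]
    (F : β → α → α → M) :
    ∑ p, ∑ q, ∑ r, F r p q = ∑ r, ∑ p, ∑ q, F r p q := by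
  rw [Finset.sum_comm (s := (Finset.univ : Finset β))]
  exact Finset.sum_congr rfl fun p _ => Finset.sum_comm

/-- An operator matrix `G` whose quadratic form on `ι → H` is nonnegative factors as `z* z`:
it acts as a positive operator on the Hilbert sum `⨁ H`, and `z` is the matrix of a factor
`C` with `C* C = G`. -/
theorem exists_star_mul_self_of_nonneg {ι : Type*} [Fintype ι] [DecidableEq ι]
    (G : ι → ι → (H →L[ℂ] H))
    (hG : ∀ ξ : ι → H, 0 ≤ ∑ p, ∑ q, inner ℂ (ξ p) (G p q (ξ q))) :
    ∃ z : ι → ι → (H →L[ℂ] H), ∀ p q, G p q = ∑ r, star (z r p) * z r q := by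
  let e := PiLp.continuousLinearEquiv 2 ℂ (fun _ : ι => H)
  let B : PiLp 2 (fun _ : ι => H) →L[ℂ] PiLp 2 (fun _ : ι => H) :=
    e.symm.toContinuousLinearMap ∘L
      (ContinuousLinearMap.pi fun p => ∑ q, G p q ∘L ContinuousLinearMap.proj q) ∘L
      e.toContinuousLinearMap
  have hB : ∀ x p, (B x) p = ∑ q, G p q (x q) := by
    intro x p
    simp [B, e]
  have hpos : B.IsPositive := by
    rw [isPositive_iff_complex]
    intro x
    have h1 := hG (fun i => x i)
    have h2 : 0 ≤ inner ℂ (B x) x := by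
      rw [← inner_conj_symm]
      have : inner ℂ x (B x) = ∑ p, ∑ q, inner ℂ (x p) (G p q (x q)) := by
        simp [PiLp.inner_apply, hB, inner_sum]
      rw [this, RCLike.star_def.symm]
      exact star_nonneg_iff.mpr h1
    rw [Complex.nonneg_iff] at h2
    exact ⟨Complex.ext (by simp) (by simpa using h2.2), h2.1⟩
  obtain ⟨C, hC⟩ := exists_adjoint_comp_self hpos
  let incl : ι → H →L[ℂ] PiLp 2 (fun _ : ι => H) := fun p =>
    e.symm.toContinuousLinearMap ∘L ContinuousLinearMap.single ℂ (fun _ : ι => H) p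
  have hincl : ∀ p v, incl p v = PiLp.single 2 p v := fun p v => rfl
  refine ⟨fun r p => ContinuousLinearMap.proj r ∘L e.toContinuousLinearMap ∘L C ∘L incl p,
    fun p q => ?_⟩
  ext v
  refine ext_inner_left ℂ fun u => ?_
  have h1 : inner ℂ u (G p q v) = inner ℂ (incl p u) (B (incl q v)) := by
    rw [PiLp.inner_apply, Finset.sum_eq_single p]
    · rw [hB, Finset.sum_eq_single q]
      · simp [hincl]
      · intro b _ hb; simp [hincl, hb]
      · simp
    · intro b _ hb; simp [hincl, hb]
    · simp
  rw [h1, hC]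
  simp only [star_eq_adjoint, ContinuousLinearMap.comp_apply, mul_apply_eq_comp, adjoint_inner_right,
    _root_.sum_apply, inner_sum]
  rw [PiLp.inner_apply]
  rfl

/-- If `θ` is completely `n`-positive, then `(k, i), (l, j) ↦ θ_ij(a_k* a_l)` is a Gram matrix.
Complete positivity is applied to `y* y`, where `y` is the matrix over `Mₙ(A)` whose only nonzero
row is the first one, the block of that row in column `l` having first row `(a_l, …, a_l)` and zeros below:
every `(i, j)` entry of the block `(k, l)` of `y* y` is then `a_k* a_l`. -/
theorem gram {n : ℕ} {θ : Fin n → Fin n → (A →L[ℂ] (H →L[ℂ] H))} (hθ : IsCnP θ)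
    {m : ℕ} (a : Fin m → A) :
    ∃ z : Fin m × Fin n → Fin m × Fin n → (H →L[ℂ] H),
      ∀ k l i j, θ i j (star (a k) * a l) = ∑ r, star (z r (k, i)) * z r (l, j) := by
  rcases m with _ | m
  · exact ⟨fun _ _ => 0, fun k => k.elim0⟩
  rcases n with _ | n
  · exact ⟨fun _ _ => 0, fun _ _ i => i.elim0⟩
  obtain ⟨z, hz⟩ := hθ (m + 1)
    (star (Matrix.of fun p l => Matrix.of fun r (_ : Fin (n + 1)) =>
        if p = 0 ∧ r = 0 then a l else 0) *
      (Matrix.of fun p l => Matrix.of fun r (_ : Fin (n + 1)) =>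
        if p = 0 ∧ r = 0 then a l else 0)) ⟨_, rfl⟩
  refine ⟨fun p q => z p.1 q.1 p.2 q.2, fun k l i j => ?_⟩
  have h1 := congrFun (congrFun (congrFun (congrFun hz k) l) i) j
  simp only [Matrix.map_apply, matApply, Matrix.of_apply, Matrix.mul_apply, Matrix.sum_apply,
    Matrix.star_apply] at h1
  rw [Fintype.sum_prod_type, ← h1]
  congr 1
  rw [Finset.sum_eq_single 0, Finset.sum_eq_single 0]
  · simp
  · intro b _ hb; simp [hb]
  · simp
  · intro b _ hb; simp [hb]
  · simp

/-! ### The sesquilinear form of a matrix of maps -/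

/-- The sesquilinear form `∑_{a, b} ∑_{i, j} ⟪f(a)_i, θ_ij(a* b) g(b)_j⟫` attached to `θ`, on the
space `A →₀ Hⁿ` of finitely supported functions; `single a (single i ξ)` plays the role of the
elementary tensor `a ⊗ ξ` in the `i`-th summand of `(A ⊗ H)ⁿ`. Only linearity in the `Hⁿ` variable
is imposed, the relations coming from `A` being absorbed by the null space of the form. -/
def form {n : ℕ} (θ : Fin n → Fin n → (A →L[ℂ] (H →L[ℂ] H)))
    (f g : A →₀ (Fin n → H)) : ℂ :=
  f.sum fun a v => g.sum fun b w => ∑ i, ∑ j, inner ℂ (v i) (θ i j (star a * b) (w j))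

theorem form_self_nonneg {n : ℕ} {θ : Fin n → Fin n → (A →L[ℂ] (H →L[ℂ] H))} (hθ : IsCnP θ)
    (f : A →₀ (Fin n → H)) : 0 ≤ form θ f f := by
  let e := f.support.equivFin.symm
  obtain ⟨z, hz⟩ := gram hθ (fun k => (e k : A))
  have h1 : form θ f f = ∑ k, ∑ l, ∑ i, ∑ j, inner ℂ (f (e k) i)
      (θ i j (star (e k : A) * (e l : A)) (f (e l) j)) := by
    unfold form Finsupp.sum
    rw [← Finset.sum_coe_sort, ← e.sum_comp]
    refine Finset.sum_congr rfl fun k _ => ?_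
    dsimp only
    rw [← Finset.sum_coe_sort f.support, ← e.sum_comp]
  have h2 : form θ f f = ∑ r, inner ℂ (∑ p, z r p (f (e p.1) p.2))
      (∑ p, z r p (f (e p.1) p.2)) := by
    rw [h1, sum_sum_sum_sum_eq]
    simp only [hz, star_eq_adjoint, mul_apply_eq_comp, _root_.sum_apply, sum_inner]
    simp only [inner_sum, Prod.mk.eta, adjoint_inner_right]
    exact sum_rotate fun r (p q : Fin f.support.card × Fin n) =>
      inner ℂ (z r p (f (e p.1) p.2)) (z r q (f (e q.1) q.2))
  rw [h2]
  refine Finset.sum_nonneg fun r _ => ?_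
  rw [inner_self_eq_norm_sq_to_K]
  positivity

/-- Completely `n`-positive maps are hermitian on products; a Gram matrix is self-adjoint. -/
theorem star_apply_of_isCnP {n : ℕ} {θ : Fin n → Fin n → (A →L[ℂ] (H →L[ℂ] H))} (hθ : IsCnP θ)
    (i j : Fin n) (a b : A) : star (θ i j (star a * b)) = θ j i (star b * a) := by
  obtain ⟨z, hz⟩ := gram hθ ![a, b]
  have h1 := hz 0 1 i j
  have h2 := hz 1 0 j i
  simp only [Matrix.cons_val_zero, Matrix.cons_val_one] at h1 h2
  rw [h1, h2]
  simp

theorem form_conj_symm {n : ℕ} {θ : Fin n → Fin n → (A →L[ℂ] (H →L[ℂ] H))} (hθ : IsCnP θ)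
    (f g : A →₀ (Fin n → H)) : star (form θ g f) = form θ f g := by
  unfold form Finsupp.sum
  simp only [star_sum]
  rw [Finset.sum_comm]
  refine Finset.sum_congr rfl fun a _ => Finset.sum_congr rfl fun b _ => ?_
  rw [Finset.sum_comm]
  refine Finset.sum_congr rfl fun i _ => Finset.sum_congr rfl fun j _ => ?_
  rw [← star_apply_of_isCnP hθ, star_eq_adjoint, adjoint_inner_right]
  exact inner_conj_symm _ _

theorem form_add_left {n : ℕ} (θ : Fin n → Fin n → (A →L[ℂ] (H →L[ℂ] H)))
    (f f' g : A →₀ (Fin n → H)) : form θ (f + f') g = form θ f g + form θ f' g := by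
  classical
  unfold form
  refine Finsupp.sum_add_index' (by simp) fun a v w => ?_
  simp [Finset.sum_add_distrib, Finsupp.sum]

theorem form_smul_left {n : ℕ} (θ : Fin n → Fin n → (A →L[ℂ] (H →L[ℂ] H)))
    (f g : A →₀ (Fin n → H)) (c : ℂ) : form θ (c • f) g = star c * form θ f g := by
  classical
  unfold form
  rw [Finsupp.sum_smul_index' (by simp)]
  simp [Finset.mul_sum, Finsupp.sum, mul_comm]

theorem form_sub {n : ℕ} (θ θ' : Fin n → Fin n → (A →L[ℂ] (H →L[ℂ] H)))
    (f g : A →₀ (Fin n → H)) :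
    form (fun i j => θ i j - θ' i j) f g = form θ f g - form θ' f g := by
  simp [form, Finsupp.sum]

theorem form_single {n : ℕ} (θ : Fin n → Fin n → (A →L[ℂ] (H →L[ℂ] H)))
    (a b : A) (i j : Fin n) (ξ η : H) :
    form θ (Finsupp.single a (Pi.single i ξ)) (Finsupp.single b (Pi.single j η)) =
      inner ℂ ξ (θ i j (star a * b) η) := by
  classical
  unfold form
  rw [Finsupp.sum_single_index (by simp), Finsupp.sum_single_index (by simp),
    Finset.sum_eq_single i, Finset.sum_eq_single j]
  · simp
  · intro k _ hk; simp [hk]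
  · simp
  · intro k _ hk; simp [hk]
  · simp

/-! ### Stinespring representations -/

section rep

variable {K : Type*} [NormedAddCommGroup K] [InnerProductSpace ℂ K] [CompleteSpace K] {n : ℕ}

/-- The linear map `f ↦ ∑_a ∑_i Φ(a) V_i f(a)_i` from `A →₀ Hⁿ` to `K`. -/
def repMap (Φ : A →⋆ₙₐ[ℂ] (K →L[ℂ] K)) (V : Fin n → (H →L[ℂ] K)) :
    (A →₀ (Fin n → H)) →ₗ[ℂ] K :=
  Finsupp.lsum ℂ fun a => ∑ i, (Φ a ∘L V i).toLinearMap ∘ₗ LinearMap.proj i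

theorem repMap_apply (Φ : A →⋆ₙₐ[ℂ] (K →L[ℂ] K)) (V : Fin n → (H →L[ℂ] K))
    (f : A →₀ (Fin n → H)) : repMap Φ V f = f.sum fun a v => ∑ i, Φ a (V i (v i)) := by
  simp only [repMap, Finsupp.lsum_apply]
  refine Finsupp.sum_congr fun a _ => ?_
  simp

theorem repMap_single (Φ : A →⋆ₙₐ[ℂ] (K →L[ℂ] K)) (V : Fin n → (H →L[ℂ] K))
    (a : A) (i : Fin n) (ξ : H) :
    repMap Φ V (Finsupp.single a (Pi.single i ξ)) = Φ a (V i ξ) := by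
  classical
  rw [repMap_apply, Finsupp.sum_single_index (by simp), Finset.sum_eq_single i]
  · simp
  · intro k _ hk; simp [hk]
  · simp

theorem denseRange_repMap {ρ : Fin n → Fin n → (A →L[ℂ] (H →L[ℂ] H))}
    {Φ : A →⋆ₙₐ[ℂ] (K →L[ℂ] K)} {V : Fin n → (H →L[ℂ] K)} (h : IsStinespringRep ρ Φ V) :
    DenseRange (repMap Φ V) := by
  refine h.2.2.mono ?_
  have : Submodule.span ℂ {x : K | ∃ (a : A) (ξ : H) (i : Fin n), x = Φ a (V i ξ)} ≤
      LinearMap.range (repMap Φ V) := by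
    rw [Submodule.span_le]
    rintro _ ⟨a, ξ, i, rfl⟩
    exact ⟨_, repMap_single Φ V a i ξ⟩
  exact this

/-- For `T` in the commutant of `Φ(A)`, the matrix coefficients of `T` at the vectors `Φ(a) V_i ξ`
are given by `V_i* T Φ(a* b) V_j`. -/
theorem inner_rep {Φ : A →⋆ₙₐ[ℂ] (K →L[ℂ] K)} {V : Fin n → (H →L[ℂ] K)} {T : K →L[ℂ] K}
    (hT : ∀ a : A, T.comp (Φ a) = (Φ a).comp T) (a b : A) (i j : Fin n) (ξ η : H) :
    inner ℂ (Φ a (V i ξ)) (T (Φ b (V j η))) =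
      inner ℂ ξ ((adjoint (V i)).comp (T.comp ((Φ (star a * b)).comp (V j))) η) := by
  have h1 : T (Φ (star a) (Φ b (V j η))) = Φ (star a) (T (Φ b (V j η))) :=
    DFunLike.congr_fun (hT (star a)) _
  simp only [map_mul, ContinuousLinearMap.comp_apply, mul_apply_eq_comp,
    adjoint_inner_right, h1]
  simp only [map_star, star_eq_adjoint, adjoint_inner_right]

/-- The form of `ρ_T` is the pullback of `⟪x, T y⟫` along `repMap Φ V`. -/
theorem form_eq_inner {Φ : A →⋆ₙₐ[ℂ] (K →L[ℂ] K)} {V : Fin n → (H →L[ℂ] K)} {T : K →L[ℂ] K}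
    (hT : ∀ a : A, T.comp (Φ a) = (Φ a).comp T)
    {θ : Fin n → Fin n → (A →L[ℂ] (H →L[ℂ] H))}
    (hθ : ∀ i j a, θ i j a = (adjoint (V i)).comp (T.comp ((Φ a).comp (V j))))
    (f g : A →₀ (Fin n → H)) :
    form θ f g = inner ℂ (repMap Φ V f) (T (repMap Φ V g)) := by
  simp only [form, repMap_apply, Finsupp.sum, map_sum, sum_inner]
  simp only [inner_sum, hθ, inner_rep hT]
  exact Finset.sum_congr rfl fun a _ => Finset.sum_comm

/-- `ρ_T` is completely `n`-positive for a positive `T` in the commutant of `Φ(A)`: its amplification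
at `y* y` has quadratic form `∑_s ⟪x_s, T x_s⟫` with `x_s = ∑_p Φ(y_sp) V_p ξ_p`, the indices `s`
and `p` running over pairs in `Fin m × Fin n`. -/
theorem isCnP_of_isPositive {Φ : A →⋆ₙₐ[ℂ] (K →L[ℂ] K)} {V : Fin n → (H →L[ℂ] K)}
    {T : K →L[ℂ] K} (hT : ∀ a : A, T.comp (Φ a) = (Φ a).comp T) (hpos : T.IsPositive)
    {θ : Fin n → Fin n → (A →L[ℂ] (H →L[ℂ] H))}
    (hθ : ∀ i j a, θ i j a = (adjoint (V i)).comp (T.comp ((Φ a).comp (V j)))) :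
    IsCnP θ := by
  rintro m _ ⟨y, rfl⟩
  obtain ⟨z, hz⟩ := exists_star_mul_self_of_nonneg
    (fun p q : Fin m × Fin n => θ p.2 q.2 ((star y * y) p.1 q.1 p.2 q.2)) (by
      intro ξ
      have h1 : ∑ p, ∑ q, inner ℂ (ξ p) (θ p.2 q.2 ((star y * y) p.1 q.1 p.2 q.2) (ξ q)) =
          ∑ s : Fin m × Fin n,
            inner ℂ (∑ p : Fin m × Fin n, Φ (y s.1 p.1 s.2 p.2) (V p.2 (ξ p)))
              (T (∑ p : Fin m × Fin n, Φ (y s.1 p.1 s.2 p.2) (V p.2 (ξ p)))) := by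
        simp only [map_sum, sum_inner]
        simp only [inner_sum, inner_rep hT, ← hθ]
        rw [← sum_rotate]
        refine Finset.sum_congr rfl fun p _ => Finset.sum_congr rfl fun q _ => ?_
        rw [Matrix.mul_apply, Matrix.sum_apply, Fintype.sum_prod_type]
        simp [Matrix.mul_apply, Matrix.star_apply]
      rw [h1]
      exact Finset.sum_nonneg fun s _ => hpos.inner_nonneg_right _)
  refine ⟨Matrix.of fun k l => Matrix.of fun i j => z (k, i) (l, j), ?_⟩
  ext k l i j : 4
  have := hz (k, i) (l, j)
  simp only [Matrix.map_apply, matApply, Matrix.of_apply] at this ⊢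
  rw [this, Matrix.mul_apply, Matrix.sum_apply, Fintype.sum_prod_type]
  simp [Matrix.mul_apply, Matrix.star_apply]

theorem ext_rep {F : Type*} {L : F → K} (hL : DenseRange L)
    {T T' : K →L[ℂ] K} (h : ∀ f g, inner ℂ (L f) (T (L g)) = inner ℂ (L f) (T' (L g))) :
    T = T' := by
  refine DFunLike.coe_injective (hL.equalizer T.continuous T'.continuous (funext fun g => ?_))
  refine ext_inner_left ℂ fun x => ?_
  refine hL.induction_on x ?_ fun f => h f g
  exact isClosed_eq (by fun_prop) (by fun_prop)

theorem ext_inner_of_span {ρ : Fin n → Fin n → (A →L[ℂ] (H →L[ℂ] H))}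
    {Φ : A →⋆ₙₐ[ℂ] (K →L[ℂ] K)} {V : Fin n → (H →L[ℂ] K)} (h : IsStinespringRep ρ Φ V)
    {T T' : K →L[ℂ] K} (hTT : ∀ a b i j ξ η,
      inner ℂ (Φ a (V i ξ)) (T (Φ b (V j η))) = inner ℂ (Φ a (V i ξ)) (T' (Φ b (V j η)))) :
    T = T' := by
  refine ext_rep (denseRange_repMap h) fun f g => ?_
  simp only [repMap_apply, Finsupp.sum, map_sum, sum_inner]
  simp only [inner_sum, hTT]

theorem isPositive_of_denseRange {F : Type*} {L : F → K}
    (hL : DenseRange L) {T : K →L[ℂ] K} (h : ∀ f, 0 ≤ inner ℂ (L f) (T (L f))) :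
    T.IsPositive := by
  rw [isPositive_iff_complex]
  have h' : ∀ x, 0 ≤ inner ℂ x (T x) := by
    intro x
    refine hL.induction_on x ?_ h
    exact isClosed_le continuous_const (by fun_prop)
  intro x
  have h2 : 0 ≤ inner ℂ (T x) x := by
    rw [← inner_conj_symm, RCLike.star_def.symm]
    exact star_nonneg_iff.mpr (h' x)
  rw [Complex.nonneg_iff] at h2
  exact ⟨Complex.ext (by simp) (by simpa using h2.2), h2.1⟩

/-! ### The Radon–Nikodym derivative -/

/-- A positive semidefinite form on `F` dominated by the pullback of the inner product of `K` along
a map `L` of dense range is the pullback of `⟪x, T y⟫` for some `0 ≤ T ≤ 1`. Here `T = W* W`, where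
`W` extends `L f ↦ [f]` to a contraction from `K` to the Hilbert space completion of `F` under
the form. -/
theorem exists_operator_of_core {F : Type*} [AddCommGroup F] [Module ℂ F]
    (c : PreInnerProductSpace.Core ℂ F) {L : F →ₗ[ℂ] K} (hL : DenseRange L)
    (hle : ∀ f, (c.inner f f).re ≤ ‖L f‖ ^ 2) :
    ∃ T : K →L[ℂ] K, T.IsPositive ∧ ((1 : K →L[ℂ] K) - T).IsPositive ∧
      ∀ f g, inner ℂ (L f) (T (L g)) = c.inner f g := by
  let : SeminormedAddCommGroup F := InnerProductSpace.Core.toSeminormedAddCommGroup (c := c)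
  let : InnerProductSpace ℂ F := InnerProductSpace.ofCore c
  let J : F →ₗ[ℂ] UniformSpace.Completion F :=
    (UniformSpace.Completion.toComplL (𝕜 := ℂ) (E := F)).toLinearMap
  have hJ : ∀ f g, inner ℂ (J f) (J g) = c.inner f g := fun f g =>
    UniformSpace.Completion.inner_coe f g
  have hb : ∀ f, ‖J f‖ ≤ 1 * ‖L f‖ := by
    intro f
    rw [one_mul]
    refine le_of_sq_le_sq ?_ (norm_nonneg _)
    rw [← inner_self_eq_norm_sq (𝕜 := ℂ), hJ]
    exact hle f
  let W := J.extendOfNorm L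
  have hW : ∀ f, W (L f) = J f := LinearMap.extendOfNorm_eq hL ⟨1, hb⟩
  have hTW : ∀ f g, inner ℂ (L f) ((adjoint W ∘L W) (L g)) = c.inner f g := by
    intro f g
    rw [ContinuousLinearMap.comp_apply, adjoint_inner_right, hW, hW, hJ]
  refine ⟨adjoint W ∘L W, isPositive_adjoint_comp_self W, ?_, hTW⟩
  refine isPositive_of_denseRange hL fun f => ?_
  have h1 : inner ℂ (L f) ((1 - adjoint W ∘L W) (L f)) =
      ((‖L f‖ ^ 2 - ‖J f‖ ^ 2 : ℝ) : ℂ) := by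
    rw [_root_.sub_apply, inner_sub_right, hTW, ← hJ, one_apply_eq_self,
      inner_self_eq_norm_sq_to_K, inner_self_eq_norm_sq_to_K]
    simp
  rw [h1]
  have h2 := pow_le_pow_left₀ (norm_nonneg _) (hb f) 2
  rw [one_mul] at h2
  exact_mod_cast sub_nonneg.mpr h2

/-- Continuous maps on a possibly nonunital `A` that agree on all products `b* a` are equal, by means
of an approximate unit. -/
theorem eq_of_forall_star_mul {X : Type*} [TopologicalSpace X] [T2Space X] {f g : A → X}
    (hf : Continuous f) (hg : Continuous g)
    (h : ∀ a b : A, f (star b * a) = g (star b * a)) : f = g := by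
  -- approximate units are indexed through the order of `A`, which carries none by default
  let : PartialOrder A := CStarAlgebra.spectralOrder A
  have : StarOrderedRing A := CStarAlgebra.spectralOrderedRing A
  funext a
  have hl := CStarAlgebra.increasingApproximateUnit A
  have := hl.neBot
  have h1 := hl.tendsto_mul_right a
  refine tendsto_nhds_unique (((hf.tendsto a).comp h1).congr fun u => ?_)
    ((hg.tendsto a).comp h1)
  simpa using h a (star u)

/-- The form of a completely `n`-positive `θ` as a (possibly degenerate) inner product. -/
@[reducible]
def formCore {θ : Fin n → Fin n → (A →L[ℂ] (H →L[ℂ] H))} (hθ : IsCnP θ) :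
    PreInnerProductSpace.Core ℂ (A →₀ (Fin n → H)) where
  inner := form θ
  conj_inner_symm := fun f g => form_conj_symm hθ f g
  re_inner_nonneg := fun f => (Complex.nonneg_iff.mp (form_self_nonneg hθ f)).1
  add_left := form_add_left θ
  smul_left := fun f g r => form_smul_left θ f g r

/-- If `θ ≤ ρ`, the form of `θ` is dominated by that of `ρ`, which is the inner product of `K`. -/
theorem form_self_le {ρ : Fin n → Fin n → (A →L[ℂ] (H →L[ℂ] H))}
    {Φ : A →⋆ₙₐ[ℂ] (K →L[ℂ] K)} {V : Fin n → (H →L[ℂ] K)} (h : IsStinespringRep ρ Φ V)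
    {θ : Fin n → Fin n → (A →L[ℂ] (H →L[ℂ] H))}
    (hρθ : IsCnP (fun i j => ρ i j - θ i j)) (f : A →₀ (Fin n → H)) :
    (form θ f f).re ≤ ‖repMap Φ V f‖ ^ 2 := by
  have h1 : 0 ≤ form ρ f f - form θ f f := by
    rw [← form_sub]
    exact form_self_nonneg (θ := fun i j => ρ i j - θ i j) hρθ f
  have h2 : form ρ f f = inner ℂ (repMap Φ V f) ((1 : K →L[ℂ] K) (repMap Φ V f)) :=
    form_eq_inner (T := 1) (fun a => rfl) h.2.1 f f
  rw [one_apply_eq_self, inner_self_eq_norm_sq_to_K] at h2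
  have h3 := (Complex.nonneg_iff.mp h1).1
  rw [Complex.sub_re, h2, sub_nonneg] at h3
  exact h3.trans_eq (by norm_cast)

theorem exists_operator_form {ρ : Fin n → Fin n → (A →L[ℂ] (H →L[ℂ] H))}
    {Φ : A →⋆ₙₐ[ℂ] (K →L[ℂ] K)} {V : Fin n → (H →L[ℂ] K)} (h : IsStinespringRep ρ Φ V)
    {θ : Fin n → Fin n → (A →L[ℂ] (H →L[ℂ] H))} (hθ : IsCnP θ)
    (hρθ : IsCnP (fun i j => ρ i j - θ i j)) :
    ∃ T : K →L[ℂ] K, T.IsPositive ∧ ((1 : K →L[ℂ] K) - T).IsPositive ∧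
      ∀ f g, inner ℂ (repMap Φ V f) (T (repMap Φ V g)) = form θ f g :=
  exists_operator_of_core (F := A →₀ (Fin n → H)) (L := repMap Φ V) (formCore hθ)
    (denseRange_repMap h) (form_self_le h hρθ)

/-- Every `θ ∈ [0, ρ]` is `ρ_T` for some `T` in the commutant of `Φ(A)` with `0 ≤ T ≤ 1`. -/
theorem exists_operator_of_isCnP {ρ : Fin n → Fin n → (A →L[ℂ] (H →L[ℂ] H))}
    {Φ : A →⋆ₙₐ[ℂ] (K →L[ℂ] K)} {V : Fin n → (H →L[ℂ] K)} (h : IsStinespringRep ρ Φ V)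
    {θ : Fin n → Fin n → (A →L[ℂ] (H →L[ℂ] H))} (hθ : IsCnP θ)
    (hρθ : IsCnP (fun i j => ρ i j - θ i j)) :
    ∃ T : K →L[ℂ] K, (∀ a : A, T.comp (Φ a) = (Φ a).comp T) ∧
      T.IsPositive ∧ ((1 : K →L[ℂ] K) - T).IsPositive ∧
      (∀ (i j : Fin n) (a : A), θ i j a =
        (adjoint (V i)).comp (T.comp ((Φ a).comp (V j)))) := by
  obtain ⟨T, hT0, hT1, hT⟩ := exists_operator_form h hθ hρθ
  have hT' : ∀ a b i j ξ η, inner ℂ (Φ a (V i ξ)) (T (Φ b (V j η))) =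
      inner ℂ ξ (θ i j (star a * b) η) := by
    intro a b i j ξ η
    rw [← repMap_single, ← repMap_single, hT]
    exact form_single θ a b i j ξ η
  have hcomm : ∀ a : A, T.comp (Φ a) = (Φ a).comp T := by
    intro a
    -- both sides have matrix coefficients `⟪ξ, θ_ij(b* a c) η⟫` at `Φ(b) V_i ξ` and `Φ(c) V_j η`
    refine ext_inner_of_span h fun b b' i j ξ η => ?_
    have h1 : Φ a (Φ b' (V j η)) = Φ (a * b') (V j η) := by simp
    have h2 : adjoint (Φ a) (Φ b (V i ξ)) = Φ (star a * b) (V i ξ) := by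
      rw [← star_eq_adjoint, ← map_star, map_mul, mul_apply_eq_comp]
    rw [ContinuousLinearMap.comp_apply, ContinuousLinearMap.comp_apply, h1, hT',
      ← adjoint_inner_left (Φ a), h2, hT']
    simp [mul_assoc]
  refine ⟨T, hcomm, hT0, hT1, fun i j => ?_⟩
  have hΦ := h.1
  -- the form only sees `θ_ij` on products `b* a`
  refine congrFun (eq_of_forall_star_mul (θ i j).continuous (by fun_prop) fun a b => ?_)
  ext η
  refine ext_inner_left ℂ fun ξ => ?_
  rw [← inner_rep hcomm, hT']

end rep

/-! ### The order isomorphism -/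

/-- The Radon–Nikodym theorem: `T ↦ ρ_T` is an affine order isomorphism from
`[0, I]_ρ = {T ∈ Φ_ρ(A)' : 0 ≤ T ≤ I}` onto `[0, ρ] = {θ ∈ CPⁿ(A, L(H)) : θ ≤ ρ}`. -/
theorem statement11 {n : ℕ} (ρ : Fin n → Fin n → (A →L[ℂ] (H →L[ℂ] H)))
    (hρ : IsCnP ρ)
    {K : Type*} [NormedAddCommGroup K] [InnerProductSpace ℂ K] [CompleteSpace K]
    (Φ : A →⋆ₙₐ[ℂ] (K →L[ℂ] K)) (V : Fin n → (H →L[ℂ] K))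
    (h : IsStinespringRep ρ Φ V) :
    -- `T ↦ ρ_T` maps `[0, I]_ρ` into `[0, ρ]`
    (∀ T : K →L[ℂ] K, (∀ a : A, T.comp (Φ a) = (Φ a).comp T) →
      T.IsPositive → ((1 : K →L[ℂ] K) - T).IsPositive →
      ∃ θ : Fin n → Fin n → (A →L[ℂ] (H →L[ℂ] H)),
        (∀ (i j : Fin n) (a : A), θ i j a =
          (adjoint (V i)).comp (T.comp ((Φ a).comp (V j)))) ∧
        IsCnP θ ∧ IsCnP (fun i j => ρ i j - θ i j)) ∧
    -- injectivity
    (∀ T T' : K →L[ℂ] K,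
      (∀ a : A, T.comp (Φ a) = (Φ a).comp T) →
      (∀ a : A, T'.comp (Φ a) = (Φ a).comp T') →
      T.IsPositive → ((1 : K →L[ℂ] K) - T).IsPositive →
      T'.IsPositive → ((1 : K →L[ℂ] K) - T').IsPositive →
      (∀ (i j : Fin n) (a : A),
        (adjoint (V i)).comp (T.comp ((Φ a).comp (V j))) =
          (adjoint (V i)).comp (T'.comp ((Φ a).comp (V j)))) →
      T = T') ∧
    -- surjectivity
    (∀ θ : Fin n → Fin n → (A →L[ℂ] (H →L[ℂ] H)),
      IsCnP θ → IsCnP (fun i j => ρ i j - θ i j) →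
      ∃ T : K →L[ℂ] K, (∀ a : A, T.comp (Φ a) = (Φ a).comp T) ∧
        T.IsPositive ∧ ((1 : K →L[ℂ] K) - T).IsPositive ∧
        (∀ (i j : Fin n) (a : A), θ i j a =
          (adjoint (V i)).comp (T.comp ((Φ a).comp (V j))))) ∧
    -- affine
    (∀ T₁ T₂ : K →L[ℂ] K,
      (∀ a : A, T₁.comp (Φ a) = (Φ a).comp T₁) →
      (∀ a : A, T₂.comp (Φ a) = (Φ a).comp T₂) →
      T₁.IsPositive → ((1 : K →L[ℂ] K) - T₁).IsPositive →
      T₂.IsPositive → ((1 : K →L[ℂ] K) - T₂).IsPositive →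
      ∀ lam : ℝ, 0 ≤ lam → lam ≤ 1 →
      ∀ θ₁ θ₂ θ : Fin n → Fin n → (A →L[ℂ] (H →L[ℂ] H)),
        (∀ (i j : Fin n) (a : A), θ₁ i j a =
          (adjoint (V i)).comp (T₁.comp ((Φ a).comp (V j)))) →
        (∀ (i j : Fin n) (a : A), θ₂ i j a =
          (adjoint (V i)).comp (T₂.comp ((Φ a).comp (V j)))) →
        (∀ (i j : Fin n) (a : A), θ i j a =
          (adjoint (V i)).comp
            ((((lam : ℂ) • T₁ + ((1 - lam : ℝ) : ℂ) • T₂)).comp ((Φ a).comp (V j)))) →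
        ∀ i j, θ i j = (lam : ℂ) • θ₁ i j + ((1 - lam : ℝ) : ℂ) • θ₂ i j) ∧
    -- order isomorphism
    (∀ T₁ T₂ : K →L[ℂ] K,
      (∀ a : A, T₁.comp (Φ a) = (Φ a).comp T₁) →
      (∀ a : A, T₂.comp (Φ a) = (Φ a).comp T₂) →
      T₁.IsPositive → ((1 : K →L[ℂ] K) - T₁).IsPositive →
      T₂.IsPositive → ((1 : K →L[ℂ] K) - T₂).IsPositive →
      ∀ θ₁ θ₂ : Fin n → Fin n → (A →L[ℂ] (H →L[ℂ] H)),
        (∀ (i j : Fin n) (a : A), θ₁ i j a =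
          (adjoint (V i)).comp (T₁.comp ((Φ a).comp (V j)))) →
        (∀ (i j : Fin n) (a : A), θ₂ i j a =
          (adjoint (V i)).comp (T₂.comp ((Φ a).comp (V j)))) →
        ((T₂ - T₁).IsPositive ↔ IsCnP (fun i j => θ₂ i j - θ₁ i j))) := by
  refine ⟨?_, ?_, ?_, ?_, ?_⟩
  · intro T hT hT0 hT1
    have hΦ := h.1
    -- continuity of `Φ` makes `a ↦ V_i* T Φ(a) V_j` a continuous linear map
    let Φc : A →L[ℂ] (K →L[ℂ] K) :=
      { toFun := Φ, map_add' := map_add Φ, map_smul' := map_smul Φ, cont := hΦ }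
    let θ : Fin n → Fin n → (A →L[ℂ] (H →L[ℂ] H)) := fun i j =>
      (compL ℂ H K H (adjoint (V i) ∘L T)) ∘L ((compL ℂ H K K).flip (V j)) ∘L Φc
    have hθ : ∀ i j a, θ i j a = (adjoint (V i)).comp (T.comp ((Φ a).comp (V j))) :=
      fun i j a => rfl
    refine ⟨θ, hθ, isCnP_of_isPositive hT hT0 hθ,
      isCnP_of_isPositive (θ := fun i j => ρ i j - θ i j) (Φ := Φ) (V := V) (T := 1 - T)
        (fun a => ?_) hT1 fun i j a => ?_⟩
    · rw [sub_comp, comp_sub, hT a]; rfl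
    · rw [_root_.sub_apply, h.2.1, hθ, sub_comp, comp_sub]; rfl
  · intro T T' hT hT' _ _ _ _ heq
    refine ext_inner_of_span h fun a b i j ξ η => ?_
    rw [inner_rep hT, inner_rep hT', heq]
  · intro θ hθ hρθ
    exact exists_operator_of_isCnP h hθ hρθ
  · intro T₁ T₂ _ _ _ _ _ _ lam _ _ θ₁ θ₂ θ h₁ h₂ hθ i j
    ext a : 1
    rw [hθ, add_comp, comp_add, smul_comp, smul_comp, comp_smul, comp_smul, ← h₁, ← h₂]
    rfl
  · intro T₁ T₂ hT₁ hT₂ _ _ _ _ θ₁ θ₂ h₁ h₂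
    have hcomm : ∀ a, (T₂ - T₁).comp (Φ a) = (Φ a).comp (T₂ - T₁) := fun a => by
      rw [sub_comp, comp_sub, hT₁, hT₂]
    have hθ : ∀ i j a, (θ₂ i j - θ₁ i j) a =
        (adjoint (V i)).comp ((T₂ - T₁).comp ((Φ a).comp (V j))) := fun i j a => by
      rw [_root_.sub_apply, h₁, h₂, sub_comp, comp_sub]
    refine ⟨fun hpos => isCnP_of_isPositive (θ := fun i j => θ₂ i j - θ₁ i j) hcomm hpos hθ,
      fun hC => ?_⟩
    refine isPositive_of_denseRange (denseRange_repMap h) fun f => ?_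
    rw [← form_eq_inner (θ := fun i j => θ₂ i j - θ₁ i j) hcomm hθ]
    exact form_self_nonneg (θ := fun i j => θ₂ i j - θ₁ i j) hC f
end
end
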